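/- arXiv:2512.14378 — 2 statements merged into one kernel-verified Lean document; each statement's English description precedes it below -/
import Mathlib

section
/- Let n ≥ 8 be divisible by 4 and let H be a saturated orthogonal array OA(n,n−1,2,2). Then the sum of J₄(S)² over all unordered 4-subsets S of the n−1 columns of H equals n²(n−1)(n−2)(n−4)/24. -/
open Finset

lemma esum_insert {α : Type*} [DecidableEq α] (x : α → ℤ) (s : Finset α) (a : α) (ha : a ∉ s)
    (k : ℕ) :
    ∑ S ∈ (insert a s).powersetCard (k+1), ∏ j ∈ S, x j
      = ∑ S ∈ s.powersetCard (k+1), ∏ j ∈ S, x j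
        + x a * ∑ S ∈ s.powersetCard k, ∏ j ∈ S, x j := by
  have hm : ∀ S ∈ s.powersetCard k, a ∉ S := fun S hS h =>
    ha ((Finset.mem_powersetCard.1 hS).1 h)
  rw [Finset.powersetCard_succ_insert ha, Finset.sum_union, Finset.sum_image, Finset.mul_sum]
  · congr 1
    refine Finset.sum_congr rfl fun S hS => ?_
    rw [Finset.prod_insert (hm S hS)]
  · intro S hS T hT h
    have h2 := congrArg (fun U => Finset.erase U a) h
    simpa [Finset.erase_insert (hm S hS), Finset.erase_insert (hm T hT)] using h2
  · rw [Finset.disjoint_left]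
    intro S hS hT
    obtain ⟨T, _, rfl⟩ := Finset.mem_image.1 hT
    exact ha ((Finset.mem_powersetCard.1 hS).1 (Finset.mem_insert_self a T))

lemma newton_pm {α : Type*} [DecidableEq α] (x : α → ℤ) (hx : ∀ a, x a ^ 2 = 1)
    (s : Finset α) :
    (∑ S ∈ s.powersetCard 1, ∏ j ∈ S, x j = ∑ j ∈ s, x j) ∧
    (2 * ∑ S ∈ s.powersetCard 2, ∏ j ∈ S, x j = (∑ j ∈ s, x j) ^ 2 - (s.card : ℤ)) ∧
    (6 * ∑ S ∈ s.powersetCard 3, ∏ j ∈ S, x j = (∑ j ∈ s, x j) ^ 3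
      - 3 * (∑ j ∈ s, x j) * (s.card : ℤ) + 2 * ∑ j ∈ s, x j) ∧
    (24 * ∑ S ∈ s.powersetCard 4, ∏ j ∈ S, x j = (∑ j ∈ s, x j) ^ 4
      - 6 * (∑ j ∈ s, x j) ^ 2 * (s.card : ℤ) + 8 * (∑ j ∈ s, x j) ^ 2
      + 3 * (s.card : ℤ) ^ 2 - 6 * (s.card : ℤ)) := by
  induction s using Finset.induction_on with
  | empty =>
    have h : ∀ k, (∅ : Finset α).powersetCard (k+1) = ∅ := fun k => by
      apply Finset.powersetCard_eq_empty.2; simp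
    simp [h 0, h 1, h 2, h 3]
  | insert a s ha ih =>
    obtain ⟨h1, h2, h3, h4⟩ := ih
    have e1 := esum_insert x s a ha 0
    have e2 := esum_insert x s a ha 1
    have e3 := esum_insert x s a ha 2
    have e4 := esum_insert x s a ha 3
    simp only [Nat.reduceAdd, zero_add, Finset.powersetCard_zero, Finset.sum_singleton,
      Finset.prod_empty, mul_one] at e1 e2 e3 e4
    rw [e1, e2, e3, e4, Finset.sum_insert ha, Finset.card_insert_of_notMem ha]
    push_cast
    have ht := hx a
    generalize x a = t at *
    generalize ∑ j ∈ s, x j = p at *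
    generalize (s.card : ℤ) = m at *
    rw [h1]
    refine ⟨by ring, ?_, ?_, ?_⟩
    · linear_combination h2 - ht
    · linear_combination h3 + 3 * t * h2 - (t + 3 * p) * ht + 3 * t * ht - 3 * t * ht
    · have ht3 : t ^ 3 = t := by linear_combination t * ht
      have ht4 : t ^ 4 = 1 := by linear_combination (t ^ 2 + 1) * ht
      linear_combination h4 + 4 * t * h3 - ht4 - 4 * p * ht3 - (6 * p ^ 2 - 6 * m + 2) * ht

lemma row_orth (n : ℕ) (hn : 8 ≤ n)
    (H : Fin n → Fin (n - 1) → ℤ)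
    (hpm : ∀ i j, H i j = 1 ∨ H i j = -1)
    (hbal : ∀ j, ∑ i : Fin n, H i j = 0)
    (horth : ∀ j k : Fin (n - 1), j ≠ k → ∑ i : Fin n, H i j * H i k = 0)
    (i k : Fin n) (hik : i ≠ k) : ∑ j, H i j * H k j = -1 := by
  let M : Matrix (Fin n) (Option (Fin (n-1))) ℚ := fun i o => o.elim 1 (fun j => (H i j : ℚ))
  have hn0 : (n : ℚ) ≠ 0 := by positivity
  have hb : ∀ j, ∑ i : Fin n, (H i j : ℚ) = 0 := fun j => by exact_mod_cast hbal j
  have h1 : ((n : ℚ)⁻¹ • M.transpose) * M = 1 := by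
    ext a b
    rw [Matrix.smul_mul, Matrix.smul_apply, Matrix.mul_apply]
    simp only [Matrix.transpose_apply]
    rcases a with _ | a <;> rcases b with _ | b
    · simp [M, hn0]
    · simp [M, hb]
    · simp [M, hb]
    · by_cases hab : a = b
      · subst hab
        have : ∀ i, (H i a : ℚ) * H i a = 1 := fun i => by
          rcases hpm i a with h | h <;> simp [h]
        simp [M, this, hn0]
      · have : ∑ i, (H i a : ℚ) * H i b = 0 := by exact_mod_cast horth a b hab
        simp [M, this, hab]
  have h2 : M * ((n : ℚ)⁻¹ • M.transpose) = 1 :=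
    (Matrix.mul_eq_one_comm_of_card_eq _ _ _ (by simp; omega)).1 h1
  have h3 := congrFun (congrFun h2 i) k
  rw [Matrix.mul_smul, Matrix.smul_apply, Matrix.mul_apply, Matrix.one_apply_ne hik] at h3
  simp only [Matrix.transpose_apply] at h3
  simp [M, hn0, Fintype.sum_option] at h3
  have h4 : 1 + ∑ j, H i j * H k j = 0 := by exact_mod_cast h3
  linarith




/-- For a saturated orthogonal array `OA(n, n-1, 2, 2)`, the sum of
`J₄(S)²` over all unordered 4-subsets `S` of the `n-1` columns equals
`n²(n-1)(n-2)(n-4)/24`. -/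
theorem sum_J4_sq_saturated (n : ℕ) (hn : 8 ≤ n) (h4 : 4 ∣ n)
    (H : Fin n → Fin (n - 1) → ℤ)
    (hpm : ∀ i j, H i j = 1 ∨ H i j = -1)
    (hbal : ∀ j, ∑ i : Fin n, H i j = 0)
    (horth : ∀ j k : Fin (n - 1), j ≠ k → ∑ i : Fin n, H i j * H i k = 0) :
    ∑ S ∈ (Finset.univ : Finset (Fin (n - 1))).powersetCard 4,
        (∑ i : Fin n, ∏ j ∈ S, H i j) ^ 2
      = (n : ℤ) ^ 2 * ((n : ℤ) - 1) * ((n : ℤ) - 2) * ((n : ℤ) - 4) / 24 := by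
  have key : ∀ i k : Fin n, 24 * ∑ S ∈ (Finset.univ : Finset (Fin (n - 1))).powersetCard 4,
      ∏ j ∈ S, (H i j * H k j) = 3 * ((n:ℤ) - 2) * (n - 4)
        + if i = k then ((n:ℤ) - 1) * (n - 2) * (n - 3) * (n - 4) - 3 * ((n:ℤ) - 2) * (n - 4)
          else 0 := by
    intro i k
    have hx : ∀ j, (H i j * H k j) ^ 2 = 1 := fun j => by
      rcases hpm i j with h | h <;> rcases hpm k j with h' | h' <;> simp [h, h']
    have hc : ((Finset.univ : Finset (Fin (n-1))).card : ℤ) = n - 1 := by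
      simp; omega
    rw [(newton_pm (fun j => H i j * H k j) hx Finset.univ).2.2.2, hc]
    split_ifs with hik
    · subst hik
      have : ∀ j, H i j * H i j = 1 := fun j => by rcases hpm i j with h | h <;> simp [h]
      have hs : ∑ j, H i j * H i j = (n:ℤ) - 1 := by
        simp only [this, Finset.sum_const, nsmul_eq_mul, mul_one, hc]
      rw [hs]; ring
    · rw [row_orth n hn H hpm hbal horth i k hik]; ring
  have h24 : 24 * ∑ S ∈ (Finset.univ : Finset (Fin (n - 1))).powersetCard 4,
        (∑ i : Fin n, ∏ j ∈ S, H i j) ^ 2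
      = (n : ℤ) ^ 2 * ((n : ℤ) - 1) * ((n : ℤ) - 2) * ((n : ℤ) - 4) := by
    have : ∑ S ∈ (Finset.univ : Finset (Fin (n - 1))).powersetCard 4,
        (∑ i : Fin n, ∏ j ∈ S, H i j) ^ 2 = ∑ i : Fin n, ∑ k : Fin n,
        ∑ S ∈ (Finset.univ : Finset (Fin (n - 1))).powersetCard 4,
          ∏ j ∈ S, (H i j * H k j) := by
      simp only [sq, Finset.sum_mul_sum, Finset.prod_mul_distrib]
      rw [Finset.sum_comm]
      exact Finset.sum_congr rfl fun i _ => Finset.sum_comm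
    rw [this]
    simp only [Finset.mul_sum] at key
    simp only [Finset.mul_sum, key, Finset.sum_add_distrib, Finset.sum_ite_eq, Finset.mem_univ,
      if_true, Finset.sum_const, Finset.card_univ, Fintype.card_fin, nsmul_eq_mul]
    ring
  rw [← h24]
  simp
end

section
/- Let n ≥ 8 be divisible by 4 and let H be a saturated orthogonal array OA(n,n−1,2,2). Let X be the n × (n(n−1)/2) two-level design whose columns are the n−1 columns of H together with the interaction columns of all (n−1 choose 2) unordered pairs of distinct columns of H. Then E(s²)(X) = n²/(n+1), and X is E(s²)-optimal: E(s²)(X) ≤ E(s²)(Y) for every n × (n(n−1)/2) balanced two-level design Y. -/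
open Finset

/-- The `E(s²)` value of an `n × m` two-level design `X` (columns indexed by `ι`,
`m = card ι`): the average of the squared off-diagonal entries of `XᵀX`. -/
noncomputable def Es2 {n : ℕ} {ι : Type} [Fintype ι] [DecidableEq ι]
    (X : Fin n → ι → ℚ) : ℚ :=
  (∑ i : ι, ∑ j : ι, if i ≠ j then (∑ r : Fin n, X r i * X r j) ^ 2 else 0) /
    ((Fintype.card ι : ℚ) * ((Fintype.card ι : ℚ) - 1))

theorem aux_T {n : ℕ} {ι : Type} [Fintype ι] [DecidableEq ι] (X : Fin n → ι → ℚ)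
    (h : ∀ i j, X i j = 1 ∨ X i j = -1) :
    (∑ i : ι, ∑ j : ι, if i ≠ j then (∑ r : Fin n, X r i * X r j) ^ 2 else 0) =
      (∑ r : Fin n, ∑ s : Fin n, (∑ i : ι, X r i * X s i) ^ 2)
        - (Fintype.card ι : ℚ) * (n : ℚ) ^ 2 := by
  have hsq : ∀ r i, X r i * X r i = 1 := by
    intro r i
    rcases h r i with h | h <;> rw [h] <;> norm_num
  have h1 : ∀ i j : ι, (if i ≠ j then (∑ r : Fin n, X r i * X r j) ^ 2 else 0) =
      (∑ r : Fin n, X r i * X r j) ^ 2 - (if i = j then (n : ℚ) ^ 2 else 0) := by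
    intro i j
    by_cases hij : i = j
    · subst hij
      simp [hsq]
    · simp [hij]
  simp_rw [h1, Finset.sum_sub_distrib]
  congr 1
  · simp_rw [sq, Finset.sum_mul_sum]
    calc _ = ∑ i : ι, ∑ r : Fin n, ∑ j : ι, ∑ s : Fin n, X r i * X r j * (X s i * X s j) :=
          Finset.sum_congr rfl fun i _ => Finset.sum_comm
      _ = ∑ r : Fin n, ∑ i : ι, ∑ j : ι, ∑ s : Fin n, X r i * X r j * (X s i * X s j) :=
          Finset.sum_comm
      _ = ∑ r : Fin n, ∑ i : ι, ∑ s : Fin n, ∑ j : ι, X r i * X r j * (X s i * X s j) :=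
          Finset.sum_congr rfl fun r _ => Finset.sum_congr rfl fun i _ => Finset.sum_comm
      _ = ∑ r : Fin n, ∑ s : Fin n, ∑ i : ι, ∑ j : ι, X r i * X r j * (X s i * X s j) :=
          Finset.sum_congr rfl fun r _ => Finset.sum_comm
      _ = _ := by
          refine Finset.sum_congr rfl fun r _ => Finset.sum_congr rfl fun s _ =>
            Finset.sum_congr rfl fun i _ => Finset.sum_congr rfl fun j _ => ?_
          ring
  · simp

theorem aux_pair {k : ℕ} (a : Fin k → ℚ) :
    2 * ∑ p : {p : Fin k × Fin k // p.1 < p.2}, a p.1.1 * a p.1.2 =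
      (∑ j, a j) ^ 2 - ∑ j, a j * a j := by
  have h0 : ∑ p : {p : Fin k × Fin k // p.1 < p.2}, a p.1.1 * a p.1.2 =
      ∑ i, ∑ j, if i < j then a i * a j else 0 := by
    rw [← Fintype.sum_prod_type' (f := fun i j => if i < j then a i * a j else 0),
      ← Finset.sum_filter]
    exact (Finset.sum_subtype _ (by simp) (fun p : Fin k × Fin k => a p.1 * a p.2)).symm
  have h2 : ∑ i, ∑ j, (if i < j then a i * a j else 0) =
      ∑ i, ∑ j, if j < i then a i * a j else 0 := by
    rw [Finset.sum_comm]
    simp_rw [mul_comm]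
  have h3 : ∑ j, a j * a j = ∑ i, ∑ j, if i = j then a i * a j else 0 := by simp
  rw [h0, two_mul]
  nth_rewrite 2 [h2]
  rw [h3, sq, Finset.sum_mul_sum, ← Finset.sum_add_distrib, ← Finset.sum_sub_distrib]
  refine Finset.sum_congr rfl fun i _ => ?_
  rw [← Finset.sum_add_distrib, ← Finset.sum_sub_distrib]
  refine Finset.sum_congr rfl fun j _ => ?_
  rcases lt_trichotomy i j with h | h | h
  · simp [h, h.not_gt, h.ne]
  · simp [h]
  · simp [h, h.not_gt, h.ne']

theorem aux_row (n : ℕ) (hn : 8 ≤ n) (H : Fin n → Fin (n - 1) → ℚ)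
    (hpm : ∀ i j, H i j = 1 ∨ H i j = -1)
    (hbal : ∀ j, ∑ i : Fin n, H i j = 0)
    (horth : ∀ j k : Fin (n - 1), j ≠ k → ∑ i : Fin n, H i j * H i k = 0)
    (r s : Fin n) (hrs : r ≠ s) : ∑ j, H r j * H s j = -1 := by
  have hsq : ∀ r i, H r i * H r i = 1 := by
    intro r i
    rcases hpm r i with h | h <;> rw [h] <;> norm_num
  have hn0 : (n : ℚ) ≠ 0 := by
    have : n ≠ 0 := by omega
    exact_mod_cast this
  let M : Matrix (Fin n) (Unit ⊕ Fin (n - 1)) ℚ := Matrix.of fun r => Sum.elim (fun _ => 1) (H r)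
  have h1 : ((n : ℚ)⁻¹ • M.transpose) * M = 1 := by
    ext i j
    rw [Matrix.smul_mul, Matrix.smul_apply, Matrix.mul_apply]
    rcases i with i | i <;> rcases j with j | j
    · simp [M, Matrix.transpose_apply, hn0]
    · simp [M, Matrix.transpose_apply, hbal]
    · simp [M, Matrix.transpose_apply, hbal]
    · by_cases hij : i = j
      · subst hij
        simp [M, Matrix.transpose_apply, hsq, hn0]
      · simp [M, Matrix.transpose_apply, horth i j hij, hij]
  have h2 : M * ((n : ℚ)⁻¹ • M.transpose) = 1 := by
    refine (Matrix.mul_eq_one_comm_of_card_eq _ _ _ ?_).1 h1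
    simp
    omega
  have h3 := congrFun (congrFun h2 r) s
  rw [Matrix.mul_smul, Matrix.smul_apply, Matrix.mul_apply, Matrix.one_apply_ne hrs] at h3
  simp [M, Matrix.transpose_apply, hn0] at h3
  linarith

/-- Augmenting a saturated `OA(n, n-1, 2, 2)` with all its two-column
interaction columns yields an `n × (n(n-1)/2)` design `X` with `E(s²)(X) = n²/(n+1)`,
which is `E(s²)`-optimal among all balanced `n × (n(n-1)/2)` two-level designs. -/
theorem Es2_optimal_full (n : ℕ) (hn : 8 ≤ n) (h4 : 4 ∣ n)
    (H : Fin n → Fin (n - 1) → ℚ)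
    (hpm : ∀ i j, H i j = 1 ∨ H i j = -1)
    (hbal : ∀ j, ∑ i : Fin n, H i j = 0)
    (horth : ∀ j k : Fin (n - 1), j ≠ k → ∑ i : Fin n, H i j * H i k = 0)
    (X : Fin n → (Fin (n - 1) ⊕ {p : Fin (n - 1) × Fin (n - 1) // p.1 < p.2}) → ℚ)
    (hX : ∀ r, X r = Sum.elim (fun j => H r j) (fun p => H r p.1.1 * H r p.1.2)) :
    Es2 X = (n : ℚ) ^ 2 / ((n : ℚ) + 1) ∧
      ∀ Y : Fin n → Fin (n * (n - 1) / 2) → ℚ,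
        (∀ i j, Y i j = 1 ∨ Y i j = -1) → (∀ j, ∑ i : Fin n, Y i j = 0) →
          Es2 X ≤ Es2 Y := by
  have hn1 : ((n - 1 : ℕ) : ℚ) = n - 1 := by
    rw [Nat.cast_sub (by omega)]; simp
  have hnq : (8 : ℚ) ≤ n := by exact_mod_cast hn
  have hsq : ∀ r i, H r i * H r i = 1 := by
    intro r i
    rcases hpm r i with h | h <;> rw [h] <;> norm_num
  have hXpm : ∀ r i, X r i = 1 ∨ X r i = -1 := by
    intro r i
    rw [hX]
    rcases i with j | p
    · exact hpm r j
    · rcases hpm r p.1.1 with h | h <;> rcases hpm r p.1.2 with h' | h' <;> simp [h, h']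
  have hcard : (Fintype.card (Fin (n - 1) ⊕ {p : Fin (n - 1) × Fin (n - 1) // p.1 < p.2}) : ℚ)
      = n * (n - 1) / 2 := by
    have := aux_pair (fun _ : Fin (n - 1) => (1 : ℚ))
    simp only [mul_one, Finset.sum_const, Finset.card_univ, nsmul_eq_mul, Fintype.card_fin,
      hn1] at this
    rw [Fintype.card_sum, Nat.cast_add, Fintype.card_fin, hn1]
    linarith
  have hW : ∀ r s, (∑ i, X r i * X s i) ^ 2 =
      (n : ℚ) ^ 2 / 4 + if r = s then (n * (n - 1) / 2 : ℚ) ^ 2 - (n : ℚ) ^ 2 / 4 else 0 := by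
    intro r s
    by_cases hrs : r = s
    · subst hrs
      have : ∀ i, X r i * X r i = 1 := by
        intro i
        rcases hXpm r i with h | h <;> rw [h] <;> norm_num
      simp only [this, Finset.sum_const, Finset.card_univ, nsmul_eq_mul, hcard]
      simp
    · have h1 := aux_row n hn H hpm hbal horth r s hrs
      have h2 := aux_pair (fun j => H r j * H s j)
      have h3 : ∀ j, H r j * H s j * (H r j * H s j) = 1 := by
        intro j
        rw [mul_mul_mul_comm, hsq, hsq, one_mul]
      simp only [h1, h3, Finset.sum_const, Finset.card_univ, nsmul_eq_mul, Fintype.card_fin,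
        hn1] at h2
      have h4 : ∑ i, X r i * X s i = -(n / 2 : ℚ) := by
        rw [Fintype.sum_sum_type]
        simp only [hX, Sum.elim_inl, Sum.elim_inr, h1]
        simp_rw [mul_mul_mul_comm (H r _) (H r _)]
        linarith
      rw [h4, if_neg hrs]
      ring
  have hmpos : (0 : ℚ) < n * (n - 1) / 2 := by
    have : (0 : ℚ) < n - 1 := by linarith
    positivity
  have hm1 : (0 : ℚ) < (n : ℚ) * (n - 1) / 2 - 1 := by nlinarith
  have hval : Es2 X = (n : ℚ) ^ 2 / ((n : ℚ) + 1) := by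
    unfold Es2
    rw [aux_T X hXpm, hcard]
    simp_rw [hW, Finset.sum_add_distrib]
    simp only [Finset.sum_const, Finset.card_univ, nsmul_eq_mul, Fintype.card_fin,
      Finset.sum_ite_eq, Finset.mem_univ, if_true]
    rw [div_eq_div_iff (mul_pos hmpos hm1).ne' (by linarith)]
    ring
  refine ⟨hval, ?_⟩
  intro Y hY hYb
  have hYcard : (Fintype.card (Fin (n * (n - 1) / 2)) : ℚ) = n * (n - 1) / 2 := by
    rw [Fintype.card_fin, Nat.cast_div (Nat.even_mul_pred_self n).two_dvd (by norm_num),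
      Nat.cast_mul, hn1]
    norm_num
  have hD : ∀ r, ∑ i, Y r i * Y r i = (n * (n - 1) / 2 : ℚ) := by
    intro r
    rw [← hYcard]
    have : ∀ i, Y r i * Y r i = 1 := by
      intro i
      rcases hY r i with h | h <;> rw [h] <;> norm_num
    simp [this]
  have hS : ∑ r, ∑ s, ∑ i, Y r i * Y s i = 0 := by
    have : ∀ r, ∑ s, ∑ i, Y r i * Y s i = 0 := by
      intro r
      rw [Finset.sum_comm]
      simp_rw [← Finset.mul_sum, hYb]
      simp
    simp [this]
  have hlow : ∀ r s, -(n : ℚ) * (∑ i, Y r i * Y s i) - (n : ℚ) ^ 2 / 4 +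
      (if r = s then ((n * (n - 1) / 2 : ℚ) + n / 2) ^ 2 else 0) ≤
      (∑ i, Y r i * Y s i) ^ 2 := by
    intro r s
    by_cases hrs : r = s
    · subst hrs
      rw [hD, if_pos rfl]
      apply le_of_eq
      ring
    · rw [if_neg hrs]
      nlinarith [sq_nonneg ((∑ i, Y r i * Y s i) + n / 2)]
  have hT := Finset.sum_le_sum fun r (_ : r ∈ Finset.univ) =>
    Finset.sum_le_sum fun s (_ : s ∈ Finset.univ) => hlow r s
  simp_rw [Finset.sum_add_distrib, Finset.sum_sub_distrib, ← Finset.mul_sum] at hT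
  rw [hS] at hT
  simp only [Finset.sum_const, Finset.card_univ, nsmul_eq_mul, Fintype.card_fin,
    Finset.sum_ite_eq, Finset.mem_univ, if_true] at hT
  rw [hval]
  unfold Es2
  rw [aux_T Y hY, hYcard, div_le_div_iff₀ (by linarith) (mul_pos hmpos hm1)]
  have hp : (0 : ℚ) ≤ (n : ℚ) + 1 := by linarith
  nlinarith [mul_le_mul_of_nonneg_right hT hp]
end
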